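/- Let F be a distribution on [0,∞) with unbounded support. If (F*F)‾(x)/F̄(x) → c as x → ∞, where c ∈ (0,∞], then c = 2φ(γ̂), where φ is the Laplace transform of F and γ̂ = sup{γ : φ(γ) < ∞}. -/

import Mathlib

open MeasureTheory Filter Real Set
open scoped ENNReal Topology

noncomputable section

/-- Convolution of two measures on ℝ: distribution of the sum of independent r.v.'s. -/
def mconv (μ ν : MeasureTheory.Measure ℝ) : MeasureTheory.Measure ℝ :=
  MeasureTheory.Measure.map (fun p : ℝ × ℝ => p.1 + p.2) (μ.prod ν)

/-- The tail F̄(x) = F(x,∞). -/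
def tail (F : MeasureTheory.Measure ℝ) (x : ℝ) : ℝ≥0∞ := F (Set.Ioi x)

/-- Laplace transform φ(γ) = ∫ e^{γx} F(dx), with value in [0,∞]. -/
def phi (F : MeasureTheory.Measure ℝ) (γ : ℝ) : ℝ≥0∞ :=
  ∫⁻ x, ENNReal.ofReal (Real.exp (γ * x)) ∂F

/-- F is heavy-tailed: φ(γ) = ∞ for every γ > 0. -/
def IsHeavyTailed (F : MeasureTheory.Measure ℝ) : Prop :=
  ∀ γ : ℝ, 0 < γ → phi F γ = ⊤

/-- γ̂ = sup{γ : φ(γ) < ∞} ∈ [0,∞] (for distributions on [0,∞)). -/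
def gammaHat (F : MeasureTheory.Measure ℝ) : ℝ≥0∞ :=
  sSup {p : ℝ≥0∞ | ∃ γ : ℝ, p = ENNReal.ofReal γ ∧ phi F γ < ⊤}

/-- φ(γ̂) = lim_{γ↑γ̂} φ(γ), realized (by monotonicity of φ) as sup over γ < γ̂. -/
def phiHat (F : MeasureTheory.Measure ℝ) : ℝ≥0∞ :=
  ⨆ (γ : ℝ) (_ : ENNReal.ofReal γ < gammaHat F ∨ γ < 0), phi F γ

/- Write `ρ x = tail (mconv F F) x / tail F x`. If `ρ ≤ K` eventually, then for `B` large and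
`φ(γ) < ∞`, comparing tails on `(B, ∞)` and keeping only the sums with one summand `≤ B` and the
other `> B` gives
`2 (∫_{x ≤ B} e^{γx} dF) (∫_{x > B} e^{γx} dF) ≤ K ∫_{x > B} e^{γx} dF`,
hence `2 φ(γ) ≤ K`.

If `ρ ≥ r > 2 φ(γ)` eventually, tilt: for `w = exp (γ x + ε min(x, A))` and its derivative
`g = min(x, A) w` in `ε`, the product rule `g(x + y) ≤ g(x) w(y) + w(x) g(y)` gives
`r ∫ g ≤ const + 2 (∫ w) (∫ g)`, so `∫ g` is bounded independently of `A` and `ε` as long as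
`∫ w ≤ q < r / 2`. Since `∫ w ≤ φ(γ) + ε ∫ g`, for small `ε` the bound `∫ w ≤ q` propagates from
`A = 0` to all `A ∈ ℕ`, and `A → ∞` yields `φ(γ + ε) < ∞`, which is impossible for `γ = γ̂`. -/

section Order

theorem min_add_le_min_add_min {α : Type*} [AddCommMonoid α] [LinearOrder α]
    [IsOrderedAddMonoid α] {a x y : α} (ha : 0 ≤ a) (hx : 0 ≤ x) (hy : 0 ≤ y) :
    min (x + y) a ≤ min x a + min y a := by
  obtain hxa | hax := le_total x a
  · obtain hya | hay := le_total y a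
    · rw [min_eq_left hxa, min_eq_left hya]
      exact min_le_left _ _
    · rw [min_eq_right hay]
      exact (min_le_right _ _).trans (le_add_of_nonneg_left (le_min hx ha))
  · rw [min_eq_right hax]
    exact (min_le_right _ _).trans (le_add_of_nonneg_right (le_min hy ha))

theorem eq_Ioi_csInf_of_isOpen_of_isUpperSet {α : Type*} [ConditionallyCompleteLinearOrder α]
    [DenselyOrdered α] [NoMinOrder α] [TopologicalSpace α] [OrderTopology α] {s : Set α}
    (hopen : IsOpen s) (hupper : IsUpperSet s) (hne : s.Nonempty) (hbdd : BddBelow s) :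
    s = Ioi (sInf s) := by
  apply Subset.antisymm
  · rw [← interior_Ici, hopen.subset_interior_iff]
    exact fun a ha => csInf_le hbdd ha
  · intro a ha
    obtain ⟨b, hb, hba⟩ := exists_lt_of_csInf_lt hne ha
    exact hupper hba.le hb

end Order

section Lintegral

variable {α : Type*} [MeasurableSpace α] {μ : Measure α}

theorem lintegral_le_of_tendsto_ae {ι : Type*} {l : Filter ι} [l.NeBot] [l.IsCountablyGenerated]
    {f : ι → α → ℝ≥0∞} {g : α → ℝ≥0∞} {C : ℝ≥0∞} (hf : ∀ i, Measurable (f i))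
    (hlim : ∀ᵐ x ∂μ, Tendsto (fun i => f i x) l (𝓝 (g x)))
    (hC : ∀ᶠ i in l, ∫⁻ x, f i x ∂μ ≤ C) : ∫⁻ x, g x ∂μ ≤ C :=
  calc ∫⁻ x, g x ∂μ = ∫⁻ x, liminf (fun i => f i x) l ∂μ :=
        lintegral_congr_ae (hlim.mono fun _ hx => hx.liminf_eq.symm)
    _ ≤ liminf (fun i => ∫⁻ x, f i x ∂μ) l := lintegral_liminf_le hf
    _ ≤ liminf (fun _ => C) l := liminf_le_liminf hC
    _ = C := liminf_const C

theorem lintegral_lintegral_mul_add_mul {u v : α → ℝ≥0∞} (hu : Measurable u) (hv : Measurable v) :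
    ∫⁻ x, ∫⁻ y, (u x * v y + v x * u y) ∂μ ∂μ = 2 * ((∫⁻ x, u x ∂μ) * ∫⁻ x, v x ∂μ) := by
  have inner (x : α) : ∫⁻ y, (u x * v y + v x * u y) ∂μ =
      u x * ∫⁻ y, v y ∂μ + v x * ∫⁻ y, u y ∂μ := by
    rw [lintegral_add_left (hv.const_mul _), lintegral_const_mul _ hv, lintegral_const_mul _ hu]
  simp_rw [inner]
  rw [lintegral_add_left (hu.mul_const _), lintegral_mul_const _ hu, lintegral_mul_const _ hv]
  ring

end Lintegral

section TailComparison

variable {μ ν : Measure ℝ} {f : ℝ → ℝ} {B : ℝ}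

theorem setLIntegral_Ioi_le_of_tail_le (hf : Continuous f) (hmono : MonotoneOn f (Ioi B))
    (hnonneg : ∀ x ∈ Ioi B, 0 ≤ f x) (htail : ∀ x, B ≤ x → tail μ x ≤ tail ν x) :
    ∫⁻ x in Ioi B, ENNReal.ofReal (f x) ∂μ ≤ ∫⁻ x in Ioi B, ENNReal.ofReal (f x) ∂ν := by
  have layer_cake (ξ : Measure ℝ) : ∫⁻ x in Ioi B, ENNReal.ofReal (f x) ∂ξ =
      ∫⁻ t in Ioi 0, ξ ({x | t < f x} ∩ Ioi B) := by
    rw [lintegral_eq_lintegral_meas_lt _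
      ((ae_restrict_mem measurableSet_Ioi).mono hnonneg) hf.aemeasurable]
    simp_rw [Measure.restrict_apply (measurableSet_lt measurable_const hf.measurable)]
  rw [layer_cake, layer_cake]
  refine lintegral_mono fun t => ?_
  set U := {x | t < f x} ∩ Ioi B
  obtain hempty | hne := U.eq_empty_or_nonempty
  · simp [hempty]
  have hopen : IsOpen U := (isOpen_lt continuous_const hf).inter isOpen_Ioi
  have hupper : IsUpperSet U := fun a b hab ⟨hta, hBa⟩ =>
    ⟨lt_of_lt_of_le hta (hmono hBa (hBa.trans_le hab) hab), hBa.trans_le hab⟩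
  have hbound : B ∈ lowerBounds U := fun a ha => le_of_lt ha.2
  rw [eq_Ioi_csInf_of_isOpen_of_isUpperSet hopen hupper hne ⟨B, hbound⟩]
  exact htail _ (le_csInf hne hbound)

theorem lintegral_le_of_tail_le (hμ : ∀ᵐ x ∂μ, 0 ≤ x) (hB : 0 ≤ B) (hf : Continuous f)
    (hmono : MonotoneOn f (Ici 0)) (hnonneg : ∀ x ∈ Ici 0, 0 ≤ f x)
    (htail : ∀ x, B ≤ x → tail μ x ≤ tail ν x) :
    ∫⁻ x, ENNReal.ofReal (f x) ∂μ ≤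
      ENNReal.ofReal (f B) * μ univ + ∫⁻ x, ENNReal.ofReal (f x) ∂ν := by
  rw [← lintegral_add_compl _ (measurableSet_Iic (a := B)), compl_Iic]
  have hsub : Ioi B ⊆ Ici 0 := fun x hx => hB.trans (le_of_lt hx)
  gcongr ?_ + ?_
  · calc ∫⁻ x in Iic B, ENNReal.ofReal (f x) ∂μ
        ≤ ∫⁻ _ in Iic B, ENNReal.ofReal (f B) ∂μ := by
          apply lintegral_mono_ae
          filter_upwards [ae_restrict_of_ae hμ, ae_restrict_mem measurableSet_Iic] with x hx hxB
          exact ENNReal.ofReal_le_ofReal (hmono hx hB hxB)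
      _ ≤ ENNReal.ofReal (f B) * μ univ := by
          rw [setLIntegral_const]
          gcongr
          exact subset_univ _
  · exact (setLIntegral_Ioi_le_of_tail_le hf (hmono.mono hsub) (fun x hx => hnonneg x (hsub hx))
      htail).trans (setLIntegral_le_lintegral _ _)

end TailComparison

section Convolution

variable {f u v : ℝ → ℝ≥0∞}

theorem lintegral_mconv {μ ν : Measure ℝ} [SFinite ν] (hf : Measurable f) :
    ∫⁻ z, f z ∂(mconv μ ν) = ∫⁻ x, ∫⁻ y, f (x + y) ∂ν ∂μ :=
  Measure.lintegral_conv hf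

variable {F : Measure ℝ} [SFinite F]

theorem lintegral_mconv_self_le (hF : ∀ᵐ x ∂F, 0 ≤ x) (hf : Measurable f) (hu : Measurable u)
    (hv : Measurable v)
    (h : ∀ x y, 0 ≤ x → 0 ≤ y → f (x + y) ≤ u x * v y + v x * u y) :
    ∫⁻ z, f z ∂(mconv F F) ≤ 2 * ((∫⁻ x, u x ∂F) * ∫⁻ x, v x ∂F) := by
  rw [lintegral_mconv hf, ← lintegral_lintegral_mul_add_mul hu hv]
  exact lintegral_mono_ae <| hF.mono fun x hx =>
    lintegral_mono_ae <| hF.mono fun y hy => h x y hx hy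

theorem le_lintegral_mconv_self (hF : ∀ᵐ x ∂F, 0 ≤ x) (hf : Measurable f) (hu : Measurable u)
    (hv : Measurable v)
    (h : ∀ x y, 0 ≤ x → 0 ≤ y → u x * v y + v x * u y ≤ f (x + y)) :
    2 * ((∫⁻ x, u x ∂F) * ∫⁻ x, v x ∂F) ≤ ∫⁻ z, f z ∂(mconv F F) := by
  rw [lintegral_mconv hf, ← lintegral_lintegral_mul_add_mul hu hv]
  exact lintegral_mono_ae <| hF.mono fun x hx =>
    lintegral_mono_ae <| hF.mono fun y hy => h x y hx hy

end Convolution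

section Laplace

variable {F : Measure ℝ}

theorem phi_mono (hF : ∀ᵐ x ∂F, 0 ≤ x) : Monotone (phi F) := fun a b hab =>
  lintegral_mono_ae <| hF.mono fun x hx => by gcongr

theorem phi_zero : phi F 0 = F univ := by simp [phi]

theorem phi_le_of_forall_lt {γ : ℝ} {C : ℝ≥0∞} (h : ∀ a < γ, phi F a ≤ C) : phi F γ ≤ C := by
  refine lintegral_le_of_tendsto_ae (l := 𝓝[<] γ) (f := fun a x => ENNReal.ofReal (exp (a * x)))
    (fun a => by fun_prop) (ae_of_all _ fun x => ?_) (eventually_mem_nhdsWithin.mono h)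
  have hcont : Continuous fun a => ENNReal.ofReal (exp (a * x)) :=
    ENNReal.continuous_ofReal.comp (by fun_prop)
  exact (hcont.tendsto γ).mono_left nhdsWithin_le_nhds

theorem ofReal_le_gammaHat {γ : ℝ} (h : phi F γ < ⊤) : ENNReal.ofReal γ ≤ gammaHat F :=
  le_sSup ⟨γ, rfl, h⟩

theorem phi_lt_top_of_lt_gammaHat (hF : ∀ᵐ x ∂F, 0 ≤ x) {γ : ℝ}
    (hγ : ENNReal.ofReal γ < gammaHat F) : phi F γ < ⊤ := by
  obtain ⟨_, ⟨b, rfl, hb⟩, hγb⟩ := lt_sSup_iff.1 hγ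
  exact (phi_mono hF (ENNReal.ofReal_lt_ofReal_iff'.1 hγb).1.le).trans_lt hb

theorem phi_le_phiHat {γ : ℝ} (hγ : ENNReal.ofReal γ < gammaHat F ∨ γ < 0) :
    phi F γ ≤ phiHat F :=
  le_iSup₂_of_le γ hγ le_rfl

theorem gammaHat_ne_top (htail : tail F 0 ≠ 0) (hfin : phiHat F ≠ ⊤) : gammaHat F ≠ ⊤ := by
  intro htop
  have hbound (a : ℝ) : ∫⁻ x in Ioi 0, ENNReal.ofReal (exp (a * x)) ∂F ≤ phiHat F :=
    (setLIntegral_le_lintegral _ _).trans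
      (phi_le_phiHat (Or.inl (htop ▸ ENNReal.ofReal_lt_top)))
  have hblowup : ∀ᵐ x ∂F.restrict (Ioi 0),
      Tendsto (fun a => ENNReal.ofReal (exp (a * x))) atTop (𝓝 ⊤) := by
    filter_upwards [ae_restrict_mem measurableSet_Ioi] with x hx
    exact ENNReal.tendsto_ofReal_atTop.comp
      (tendsto_exp_atTop.comp (tendsto_id.atTop_mul_const hx))
  have hle : ⊤ * tail F 0 ≤ phiHat F := by
    rw [tail, ← setLIntegral_const]
    exact lintegral_le_of_tendsto_ae (fun a => by fun_prop) hblowup (Eventually.of_forall hbound)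
  rw [ENNReal.top_mul htail, top_le_iff] at hle
  exact hfin hle

theorem phi_toReal_gammaHat_le (hγ : gammaHat F ≠ ⊤) : phi F (gammaHat F).toReal ≤ phiHat F := by
  refine phi_le_of_forall_lt fun a ha => phi_le_phiHat ?_
  obtain hneg | hnonneg := lt_or_ge a 0
  · exact Or.inr hneg
  · exact Or.inl ((ENNReal.ofReal_lt_iff_lt_toReal hnonneg hγ).2 ha)

end Laplace

section LowerBound

variable {F : Measure ℝ} {γ B : ℝ} {K : ℝ≥0∞}

theorem two_mul_setLIntegral_Iic_mul_setLIntegral_Ioi_le [SFinite F] (hF : ∀ᵐ x ∂F, 0 ≤ x) :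
    2 * ((∫⁻ x in Iic B, ENNReal.ofReal (exp (γ * x)) ∂F) *
        ∫⁻ x in Ioi B, ENNReal.ofReal (exp (γ * x)) ∂F) ≤
      ∫⁻ z in Ioi B, ENNReal.ofReal (exp (γ * z)) ∂(mconv F F) := by
  set e : ℝ → ℝ≥0∞ := fun x => ENNReal.ofReal (exp (γ * x)) with he
  have hemeas : Measurable e := by fun_prop
  have headd (x y : ℝ) : e (x + y) = e x * e y := by
    simp only [he]
    rw [← ENNReal.ofReal_mul (exp_pos _).le, ← exp_add, mul_add]
  simp_rw [← lintegral_indicator measurableSet_Iic, ← lintegral_indicator measurableSet_Ioi]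
  refine le_lintegral_mconv_self hF (hemeas.indicator measurableSet_Ioi)
    (hemeas.indicator measurableSet_Iic) (hemeas.indicator measurableSet_Ioi) fun x y hx hy => ?_
  obtain hxB | hxB := le_or_gt x B <;> obtain hyB | hyB := le_or_gt y B
  · simp [indicator, hxB.not_gt, hyB.not_gt]
  · simp [indicator, hxB, hxB.not_gt, hyB, hyB.not_ge, lt_add_of_nonneg_of_lt hx hyB, headd]
  · simp [indicator, hyB, hyB.not_gt, hxB, hxB.not_ge, lt_add_of_lt_of_nonneg hxB hy, headd]
  · simp [indicator, hxB.not_ge, hyB.not_ge]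

theorem two_mul_setLIntegral_Iic_exp_le [SFinite F] (hF : ∀ᵐ x ∂F, 0 ≤ x) (hγ : 0 ≤ γ)
    (hfin : phi F γ < ⊤) (hB : tail F B ≠ 0)
    (htail : ∀ x, B ≤ x → tail (mconv F F) x ≤ K * tail F x) :
    2 * ∫⁻ x in Iic B, ENNReal.ofReal (exp (γ * x)) ∂F ≤ K := by
  set J := ∫⁻ x in Ioi B, ENNReal.ofReal (exp (γ * x)) ∂F with hJ
  have hJ_top : J ≠ ⊤ := ((setLIntegral_le_lintegral _ _).trans_lt hfin).ne
  have hJ_zero : J ≠ 0 := by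
    rw [← pos_iff_ne_zero, hJ, setLIntegral_pos_iff (by fun_prop)]
    have hsupport : (Function.support fun x => ENNReal.ofReal (exp (γ * x))) = univ := by
      ext x; simp [exp_pos]
    rw [hsupport, univ_inter]
    exact pos_iff_ne_zero.2 hB
  have hcompare : ∫⁻ z in Ioi B, ENNReal.ofReal (exp (γ * z)) ∂(mconv F F) ≤ K * J := by
    rw [hJ, ← smul_eq_mul, ← lintegral_smul_measure, ← Measure.restrict_smul]
    refine setLIntegral_Ioi_le_of_tail_le (by fun_prop) (fun x _ y _ hxy => ?_)
      (fun x _ => (exp_pos _).le) htail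
    gcongr
  rw [← ENNReal.mul_le_mul_iff_left hJ_zero hJ_top, mul_assoc]
  exact (two_mul_setLIntegral_Iic_mul_setLIntegral_Ioi_le hF).trans hcompare

theorem two_mul_phi_le_of_tail_mconv_le [SFinite F] (hF : ∀ᵐ x ∂F, 0 ≤ x) (hγ : 0 ≤ γ)
    (hfin : phi F γ < ⊤) (hub : ∀ x, tail F x ≠ 0)
    (htail : ∀ᶠ x in atTop, tail (mconv F F) x ≤ K * tail F x) : 2 * phi F γ ≤ K := by
  rw [mul_comm, ← ENNReal.le_div_iff_mul_le (by simp) (by simp)]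
  refine lintegral_le_of_tendsto_ae (l := atTop)
    (f := fun B => (Iic B).indicator fun x => ENNReal.ofReal (exp (γ * x)))
    (fun _ => Measurable.indicator (by fun_prop) measurableSet_Iic) (ae_of_all _ fun x => ?_) ?_
  · refine tendsto_const_nhds.congr' ((eventually_ge_atTop x).mono fun B hB => ?_)
    exact (indicator_of_mem (show x ∈ Iic B from hB) fun x => ENNReal.ofReal (exp (γ * x))).symm
  · obtain ⟨B₀, hB₀⟩ := eventually_atTop.1 htail
    filter_upwards [eventually_ge_atTop B₀] with B hB
    rw [lintegral_indicator measurableSet_Iic, ENNReal.le_div_iff_mul_le (by simp) (by simp),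
      mul_comm]
    exact two_mul_setLIntegral_Iic_exp_le hF hγ hfin (hub B) fun x hx => hB₀ x (hB.trans hx)

theorem two_mul_phiHat_le_of_tail_mconv_le [IsFiniteMeasure F] (hF : ∀ᵐ x ∂F, 0 ≤ x)
    (hub : ∀ x, tail F x ≠ 0) (htail : ∀ᶠ x in atTop, tail (mconv F F) x ≤ K * tail F x) :
    2 * phiHat F ≤ K := by
  simp_rw [phiHat, ENNReal.mul_iSup]
  refine iSup₂_le fun γ hγ => ?_
  obtain hneg | hnonneg := lt_or_ge γ 0
  · have hzero : phi F 0 < ⊤ := by simp [phi_zero]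
    exact (mul_le_mul_right (phi_mono hF hneg.le) 2).trans
      (two_mul_phi_le_of_tail_mconv_le hF le_rfl hzero hub htail)
  · exact two_mul_phi_le_of_tail_mconv_le hF hnonneg
      (phi_lt_top_of_lt_gammaHat hF (hγ.resolve_right hnonneg.not_gt)) hub htail

end LowerBound

section Tilt

/-- The exponential weight `e^{γx}` with an extra tilt of rate `ε` that stops growing at `A`, so
that it stays integrable when `φ(γ) < ∞`, while `A → ∞` recovers `e^{(γ + ε)x}`. -/
def tilt (γ ε A x : ℝ) : ℝ := exp (γ * x + ε * min x A)

/-- The derivative of `tilt γ ε A x` in `ε`, the test function of the upper bound. -/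
def tiltDeriv (γ ε A x : ℝ) : ℝ := min x A * tilt γ ε A x

variable {γ ε A x y : ℝ}

theorem tilt_pos : 0 < tilt γ ε A x := exp_pos _

@[fun_prop]
theorem continuous_tilt : Continuous (tilt γ ε A) := by unfold tilt; fun_prop

@[fun_prop]
theorem continuous_tiltDeriv : Continuous (tiltDeriv γ ε A) := by unfold tiltDeriv; fun_prop

theorem monotone_tilt (hγ : 0 ≤ γ) (hε : 0 ≤ ε) : Monotone (tilt γ ε A) := fun x y hxy => by
  unfold tilt; gcongr

theorem tiltDeriv_nonneg (hA : 0 ≤ A) (hx : 0 ≤ x) : 0 ≤ tiltDeriv γ ε A x :=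
  mul_nonneg (le_min hx hA) tilt_pos.le

theorem monotoneOn_tiltDeriv (hγ : 0 ≤ γ) (hε : 0 ≤ ε) (hA : 0 ≤ A) :
    MonotoneOn (tiltDeriv γ ε A) (Ici 0) := fun _ _ _ hy hxy =>
  mul_le_mul (min_le_min_right A hxy) (monotone_tilt hγ hε hxy) tilt_pos.le (le_min hy hA)

theorem tilt_add_le (hε : 0 ≤ ε) (hA : 0 ≤ A) (hx : 0 ≤ x) (hy : 0 ≤ y) :
    tilt γ ε A (x + y) ≤ tilt γ ε A x * tilt γ ε A y := by
  unfold tilt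
  rw [← exp_add, exp_le_exp]
  linarith [mul_le_mul_of_nonneg_left (min_add_le_min_add_min hA hx hy) hε]

theorem tiltDeriv_add_le (hε : 0 ≤ ε) (hA : 0 ≤ A) (hx : 0 ≤ x) (hy : 0 ≤ y) :
    tiltDeriv γ ε A (x + y) ≤
      tiltDeriv γ ε A x * tilt γ ε A y + tilt γ ε A x * tiltDeriv γ ε A y :=
  calc min (x + y) A * tilt γ ε A (x + y)
      ≤ (min x A + min y A) * (tilt γ ε A x * tilt γ ε A y) :=
        mul_le_mul (min_add_le_min_add_min hA hx hy) (tilt_add_le hε hA hx hy) tilt_pos.le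
          (add_nonneg (le_min hx hA) (le_min hy hA))
    _ = tiltDeriv γ ε A x * tilt γ ε A y + tilt γ ε A x * tiltDeriv γ ε A y := by
        unfold tiltDeriv; ring

theorem tiltDeriv_le_mul_exp (hA : 0 ≤ A) (hε : ε ≤ 1) (hx : 0 ≤ x) :
    tiltDeriv γ ε A x ≤ x * exp (γ * x + x) := by
  have hmin : ε * min x A ≤ x :=
    (mul_le_of_le_one_left (le_min hx hA) hε).trans (min_le_left x A)
  unfold tiltDeriv tilt
  gcongr
  exact min_le_left x A

theorem tilt_trunc_zero (hx : 0 ≤ x) : tilt γ ε 0 x = exp (γ * x) := by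
  simp [tilt, hx]

theorem tilt_eq_exp (hx : x ≤ A) : tilt γ ε A x = exp ((γ + ε) * x) := by
  rw [tilt, min_eq_left hx, add_mul]

theorem tilt_add_one_le (hε : 0 ≤ ε) : tilt γ ε (A + 1) x ≤ exp ε * tilt γ ε A x := by
  have hmin : min x (A + 1) ≤ min x A + 1 := by grind
  unfold tilt
  rw [← exp_add, exp_le_exp]
  linarith [mul_le_mul_of_nonneg_left hmin hε]

theorem tilt_le_exp_add : tilt γ ε A x ≤ exp (γ * x) + ε * tiltDeriv γ ε A x := by
  have htangent : 1 ≤ exp (-(ε * min x A)) + ε * min x A := by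
    linarith [add_one_le_exp (-(ε * min x A))]
  calc tilt γ ε A x
      ≤ (exp (-(ε * min x A)) + ε * min x A) * tilt γ ε A x :=
        le_mul_of_one_le_left tilt_pos.le htangent
    _ = exp (γ * x) + ε * tiltDeriv γ ε A x := by
        rw [add_mul, tiltDeriv, tilt, ← exp_add]
        ring_nf

variable {F : Measure ℝ}

theorem lintegral_tilt_trunc_zero (hF : ∀ᵐ x ∂F, 0 ≤ x) :
    ∫⁻ x, ENNReal.ofReal (tilt γ ε 0 x) ∂F = phi F γ :=
  lintegral_congr_ae <| hF.mono fun x hx => by simp only [tilt_trunc_zero hx]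

theorem lintegral_tilt_add_one_le (hε : 0 ≤ ε) :
    ∫⁻ x, ENNReal.ofReal (tilt γ ε (A + 1) x) ∂F ≤
      ENNReal.ofReal (exp ε) * ∫⁻ x, ENNReal.ofReal (tilt γ ε A x) ∂F := by
  rw [← lintegral_const_mul _ (by fun_prop)]
  refine lintegral_mono fun x => ?_
  rw [← ENNReal.ofReal_mul (exp_pos _).le]
  exact ENNReal.ofReal_le_ofReal (tilt_add_one_le hε)

theorem lintegral_tilt_le (hε : 0 ≤ ε) :
    ∫⁻ x, ENNReal.ofReal (tilt γ ε A x) ∂F ≤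
      phi F γ + ENNReal.ofReal ε * ∫⁻ x, ENNReal.ofReal (tiltDeriv γ ε A x) ∂F := by
  rw [phi, ← lintegral_const_mul _ (by fun_prop), ← lintegral_add_left (by fun_prop)]
  refine lintegral_mono fun x => ?_
  rw [← ENNReal.ofReal_mul hε]
  exact (ENNReal.ofReal_le_ofReal tilt_le_exp_add).trans ENNReal.ofReal_add_le

theorem lintegral_tiltDeriv_ne_top (hA : 0 ≤ A)
    (hfin : ∫⁻ x, ENNReal.ofReal (tilt γ ε A x) ∂F ≠ ⊤) :
    ∫⁻ x, ENNReal.ofReal (tiltDeriv γ ε A x) ∂F ≠ ⊤ := by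
  refine ne_top_of_le_ne_top (ENNReal.mul_ne_top ENNReal.ofReal_ne_top hfin)
    (?_ : _ ≤ ENNReal.ofReal A * _)
  rw [← lintegral_const_mul _ (by fun_prop)]
  refine lintegral_mono fun x => ?_
  rw [← ENNReal.ofReal_mul hA]
  exact ENNReal.ofReal_le_ofReal (mul_le_mul_of_nonneg_right (min_le_right x A) tilt_pos.le)

theorem phi_add_le_of_forall_lintegral_tilt_le {C : ℝ≥0∞}
    (h : ∀ n : ℕ, ∫⁻ x, ENNReal.ofReal (tilt γ ε n x) ∂F ≤ C) : phi F (γ + ε) ≤ C := by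
  refine lintegral_le_of_tendsto_ae (l := atTop)
    (f := fun (n : ℕ) x => ENNReal.ofReal (tilt γ ε n x)) (fun n => by fun_prop)
    (ae_of_all _ fun x => ?_) (Eventually.of_forall h)
  refine tendsto_const_nhds.congr' ?_
  filter_upwards [tendsto_natCast_atTop_atTop.eventually_ge_atTop x] with n hn
  rw [tilt_eq_exp hn]

end Tilt

section UpperBound

variable {F : Measure ℝ} [IsFiniteMeasure F] {γ B : ℝ} {q r : ℝ≥0∞}

theorem lintegral_le_div_of_le_tail_mconv (hF : ∀ᵐ x ∂F, 0 ≤ x) (hB : 0 ≤ B) (hqr : 2 * q < r)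
    (hr : r ≠ ⊤) (htail : ∀ x, B ≤ x → r * tail F x ≤ tail (mconv F F) x) {g w : ℝ → ℝ}
    (hg : Continuous g) (hw : Measurable w) (hgmono : MonotoneOn g (Ici 0))
    (hg0 : ∀ x ∈ Ici 0, 0 ≤ g x) (hw0 : ∀ x ∈ Ici 0, 0 ≤ w x)
    (hgw : ∀ x y, 0 ≤ x → 0 ≤ y → g (x + y) ≤ g x * w y + w x * g y)
    (hgfin : ∫⁻ x, ENNReal.ofReal (g x) ∂F ≠ ⊤) (hwq : ∫⁻ x, ENNReal.ofReal (w x) ∂F ≤ q) :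
    ∫⁻ x, ENNReal.ofReal (g x) ∂F ≤ ENNReal.ofReal (g B) * (r * F univ) / (r - 2 * q) := by
  set I := ∫⁻ x, ENNReal.ofReal (g x) ∂F with hI
  have hconv : ∫⁻ z, ENNReal.ofReal (g z) ∂(mconv F F) ≤ 2 * q * I := by
    refine (lintegral_mconv_self_le (u := fun x => ENNReal.ofReal (g x))
      (v := fun x => ENNReal.ofReal (w x)) hF (by fun_prop) (by fun_prop) (by fun_prop)
      fun x y hx hy => ?_).trans ?_
    · rw [← ENNReal.ofReal_mul (hg0 x hx), ← ENNReal.ofReal_mul (hw0 x hx)]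
      exact (ENNReal.ofReal_le_ofReal (hgw x y hx hy)).trans ENNReal.ofReal_add_le
    · rw [← hI, mul_assoc, mul_comm I]
      gcongr
  have hcompare : r * I ≤ ENNReal.ofReal (g B) * (r * F univ) + 2 * q * I := by
    have := lintegral_le_of_tail_le (μ := r • F) (Measure.ae_smul_measure hF r) hB hg hgmono hg0
      htail
    rw [lintegral_smul_measure, Measure.smul_apply, smul_eq_mul, smul_eq_mul] at this
    exact this.trans (by gcongr)
  rw [ENNReal.le_div_iff_mul_le (Or.inl (tsub_pos_of_lt hqr).ne')
    (Or.inl (ENNReal.sub_ne_top hr)), mul_comm, ENNReal.sub_mul fun _ _ => hgfin]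
  exact tsub_le_iff_right.2 hcompare

theorem exists_forall_lintegral_tiltDeriv_le (hF : ∀ᵐ x ∂F, 0 ≤ x) (hγ : 0 ≤ γ) (hqr : 2 * q < r)
    (hr : r ≠ ⊤) (htail : ∀ᶠ x in atTop, r * tail F x ≤ tail (mconv F F) x) :
    ∃ D ≠ ⊤, ∀ ε A : ℝ, 0 ≤ ε → ε ≤ 1 → 0 ≤ A →
      ∫⁻ x, ENNReal.ofReal (tilt γ ε A x) ∂F ≤ q →
      ∫⁻ x, ENNReal.ofReal (tiltDeriv γ ε A x) ∂F ≤ D := by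
  obtain ⟨B, hB, htailB⟩ : ∃ B : ℝ, 0 ≤ B ∧ ∀ x, B ≤ x → r * tail F x ≤ tail (mconv F F) x := by
    obtain ⟨B, hB⟩ := eventually_atTop.1 htail
    exact ⟨max B 0, le_max_right B 0, fun x hx => hB x ((le_max_left B 0).trans hx)⟩
  have hq : q ≠ ⊤ := by
    rintro rfl
    simp at hqr
  refine ⟨ENNReal.ofReal (B * exp (γ * B + B)) * (r * F univ) / (r - 2 * q), ?_,
    fun ε A hε hε1 hA hW => ?_⟩
  · exact ENNReal.div_ne_top (by finiteness) (tsub_pos_of_lt hqr).ne'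
  · refine (lintegral_le_div_of_le_tail_mconv hF hB hqr hr htailB continuous_tiltDeriv
      continuous_tilt.measurable (monotoneOn_tiltDeriv hγ hε hA)
      (fun x hx => tiltDeriv_nonneg hA hx) (fun x _ => tilt_pos.le)
      (fun x y hx hy => tiltDeriv_add_le hε hA hx hy)
      (lintegral_tiltDeriv_ne_top hA (ne_top_of_le_ne_top hq hW)) hW).trans ?_
    gcongr
    exact tiltDeriv_le_mul_exp hA hε1 hB

theorem exists_pos_ofReal_exp_mul_le {p D : ℝ≥0∞} (hD : D ≠ ⊤) (hpq : p < q) :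
    ∃ ε : ℝ, 0 < ε ∧ ε ≤ 1 ∧ ENNReal.ofReal (exp ε) * (p + ENNReal.ofReal ε * D) ≤ q := by
  have hp : p ≠ ⊤ := hpq.ne_top
  have hcont : Continuous fun ε : ℝ =>
      ENNReal.ofReal (exp ε * (p.toReal + ε * D.toReal)) :=
    ENNReal.continuous_ofReal.comp (by fun_prop)
  have hzero : ENNReal.ofReal (exp 0 * (p.toReal + 0 * D.toReal)) < q := by
    simpa [ENNReal.ofReal_toReal hp] using hpq
  have hnear := ((hcont.tendsto 0).eventually_lt_const hzero).filter_mono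
    (nhdsWithin_le_nhds (s := Ioi 0))
  obtain ⟨ε, hε, hε0, hε1⟩ := (hnear.and (Ioc_mem_nhdsGT one_pos)).exists
  refine ⟨ε, hε0, hε1, le_of_eq_of_le ?_ hε.le⟩
  rw [ENNReal.ofReal_mul (exp_pos _).le, ENNReal.ofReal_add (by positivity) (by positivity),
    ENNReal.ofReal_mul hε0.le, ENNReal.ofReal_toReal hp, ENNReal.ofReal_toReal hD]

theorem exists_phi_add_lt_top_of_le_tail_mconv (hF : ∀ᵐ x ∂F, 0 ≤ x) (hγ : 0 ≤ γ)
    (hr : 2 * phi F γ < r) (htail : ∀ᶠ x in atTop, r * tail F x ≤ tail (mconv F F) x) :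
    ∃ ε : ℝ, 0 < ε ∧ phi F (γ + ε) < ⊤ := by
  obtain ⟨r', hφr', hr'r⟩ := exists_between hr
  obtain ⟨q, hφq, hqr'⟩ : ∃ q, phi F γ < q ∧ 2 * q < r' := by
    have hhalf : phi F γ < r' / 2 := by
      rwa [ENNReal.lt_div_iff_mul_lt (by simp) (by simp), mul_comm]
    obtain ⟨q, hφq, hq⟩ := exists_between hhalf
    rw [ENNReal.lt_div_iff_mul_lt (by simp) (by simp), mul_comm] at hq
    exact ⟨q, hφq, hq⟩
  obtain ⟨D, hD, hbound⟩ := exists_forall_lintegral_tiltDeriv_le hF hγ hqr' hr'r.ne_top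
    (htail.mono fun x hx => (mul_le_mul_left hr'r.le _).trans hx)
  obtain ⟨ε, hε, hε1, hεq⟩ := exists_pos_ofReal_exp_mul_le hD hφq
  have hbootstrap (n : ℕ) : ∫⁻ x, ENNReal.ofReal (tilt γ ε n x) ∂F ≤ q := by
    induction n with
    | zero => simpa only [Nat.cast_zero, lintegral_tilt_trunc_zero hF] using hφq.le
    | succ n ih =>
      rw [Nat.cast_succ]
      calc ∫⁻ x, ENNReal.ofReal (tilt γ ε (n + 1) x) ∂F
          ≤ ENNReal.ofReal (exp ε) * ∫⁻ x, ENNReal.ofReal (tilt γ ε n x) ∂F :=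
            lintegral_tilt_add_one_le hε.le
        _ ≤ ENNReal.ofReal (exp ε) * (phi F γ + ENNReal.ofReal ε * D) := by
            gcongr
            refine (lintegral_tilt_le hε.le).trans ?_
            gcongr
            exact hbound ε n hε.le hε1 n.cast_nonneg ih
        _ ≤ q := hεq
  have hq : q < ⊤ := (le_mul_of_one_le_left' one_le_two).trans_lt (hqr'.trans_le le_top)
  exact ⟨ε, hε, (phi_add_le_of_forall_lintegral_tilt_le hbootstrap).trans_lt hq⟩

theorem le_two_mul_phiHat_of_le_tail_mconv (hF : ∀ᵐ x ∂F, 0 ≤ x) (hub : tail F 0 ≠ 0)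
    (htail : ∀ᶠ x in atTop, r * tail F x ≤ tail (mconv F F) x) : r ≤ 2 * phiHat F := by
  by_contra! hr
  have hphiHat : phiHat F ≠ ⊤ := by
    intro htop
    simp [htop] at hr
  have hgammaHat := gammaHat_ne_top hub hphiHat
  obtain ⟨ε, hε, hfin⟩ := exists_phi_add_lt_top_of_le_tail_mconv hF ENNReal.toReal_nonneg
    ((mul_le_mul_right (phi_toReal_gammaHat_le hgammaHat) 2).trans_lt hr) htail
  have hle := (ENNReal.ofReal_le_iff_le_toReal hgammaHat).1 (ofReal_le_gammaHat hfin)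
  linarith

end UpperBound

theorem stmt4_general (F : Measure ℝ) [IsFiniteMeasure F] (hsupp : F (Iio 0) = 0)
    (hub : ∀ x, tail F x ≠ 0) :
    liminf (fun x => tail (mconv F F) x / tail F x) atTop ≤ 2 * phiHat F ∧
      2 * phiHat F ≤ limsup (fun x => tail (mconv F F) x / tail F x) atTop := by
  have hF : ∀ᵐ x ∂F, 0 ≤ x := by simpa [ae_iff, Iio] using hsupp
  have htop (x : ℝ) : tail F x ≠ ⊤ := measure_ne_top F _
  constructor
  · refine le_of_forall_lt_imp_le_of_dense fun r hr => ?_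
    refine le_two_mul_phiHat_of_le_tail_mconv hF (hub 0) ?_
    filter_upwards [eventually_lt_of_lt_liminf hr] with x hx
    exact ENNReal.mul_le_of_le_div hx.le
  · refine le_of_forall_gt_imp_ge_of_dense fun K hK => ?_
    refine two_mul_phiHat_le_of_tail_mconv_le hF hub ?_
    filter_upwards [eventually_lt_of_limsup_lt hK] with x hx
    exact (ENNReal.div_le_iff (hub x) (htop x)).1 hx.le

/-- Theorem 3: if (F*F)‾(x)/F̄(x) → c ∈ (0,∞], then c = 2φ(γ̂). -/
theorem stmt4 (F : MeasureTheory.Measure ℝ) [MeasureTheory.IsProbabilityMeasure F]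
    (hsupp : F (Set.Iio 0) = 0) (hub : ∀ x : ℝ, tail F x ≠ 0)
    (c : ℝ≥0∞) (hc : 0 < c)
    (h : Tendsto (fun x : ℝ => tail (mconv F F) x / tail F x) atTop (𝓝 c)) :
    c = 2 * phiHat F := by
  obtain ⟨hliminf, hlimsup⟩ := stmt4_general F hsupp hub
  exact (h.liminf_eq ▸ hliminf).antisymm (h.limsup_eq ▸ hlimsup)
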